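/- Let T* be a complete theory in the language of T0+ such that every model of T* is a model of T0+, every model of T0+ embeds into some model of T*, and T* has quantifier elimination. Then T* does not have SOP3 (and consequently does not have SOP4). -/

import Mathlib

open FirstOrder FirstOrder.Language

/-- The unary function symbols of the language of `T0+`: `F0`, `F2`, `F3`. -/
inductive T0Func1 : Type
  | F0 | F2 | F3
  deriving DecidableEq

/-- The binary function symbols of the language of `T0+`: `F1`. -/
inductive T0Func2 : Type
  | F1
  deriving DecidableEq

/-- The unary relation symbols of the language of `T0+`: `Q0`, `Q1`, `Q2`. -/
inductive T0Rel1 : Type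
  | Q0 | Q1 | Q2
  deriving DecidableEq

/-- The first-order language of `T0+`, with unary relation symbols `Q0`, `Q1`, `Q2`,
unary function symbols `F0`, `F2`, `F3` and a binary function symbol `F1`. -/
def LT0 : FirstOrder.Language where
  Functions := fun n =>
    match n with
    | 1 => T0Func1
    | 2 => T0Func2
    | _ => Empty
  Relations := fun n =>
    match n with
    | 1 => T0Rel1
    | _ => Empty

namespace LT0

/-- `Q0` as a relation symbol of `LT0`. -/
def q0 : LT0.Relations 1 := T0Rel1.Q0
/-- `Q1` as a relation symbol of `LT0`. -/
def q1 : LT0.Relations 1 := T0Rel1.Q1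
/-- `Q2` as a relation symbol of `LT0`. -/
def q2 : LT0.Relations 1 := T0Rel1.Q2
/-- `F0` as a function symbol of `LT0`. -/
def f0 : LT0.Functions 1 := T0Func1.F0
/-- `F1` as a function symbol of `LT0`. -/
def f1 : LT0.Functions 2 := T0Func2.F1
/-- `F2` as a function symbol of `LT0`. -/
def f2 : LT0.Functions 1 := T0Func1.F2
/-- `F3` as a function symbol of `LT0`. -/
def f3 : LT0.Functions 1 := T0Func1.F3

/-- The `i`-th bound variable as a term. -/
def v {n : ℕ} (i : Fin n) : LT0.Term (Empty ⊕ Fin n) :=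
  FirstOrder.Language.Term.var (Sum.inr i)

/-- `Q0`, `Q1`, `Q2` form a partition of the universe. -/
def axPartition : LT0.Sentence :=
  ∀' ((q0.boundedFormula₁ (v 0) ⊔ q1.boundedFormula₁ (v 0) ⊔ q2.boundedFormula₁ (v 0)) ⊓
      ∼(q0.boundedFormula₁ (v 0) ⊓ q1.boundedFormula₁ (v 0)) ⊓
      ∼(q0.boundedFormula₁ (v 0) ⊓ q2.boundedFormula₁ (v 0)) ⊓
      ∼(q1.boundedFormula₁ (v 0) ⊓ q2.boundedFormula₁ (v 0)))

/-- `∀x (Q1(x) → Q0(F0(x)))`. -/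
def axF0 : LT0.Sentence :=
  ∀' (q1.boundedFormula₁ (v 0) ⟹ q0.boundedFormula₁ (f0.apply₁ (v 0)))

/-- `∀z ∀x (Q2(z) ∧ Q0(x) → Q1(F1(z,x)))`. -/
def axF1 : LT0.Sentence :=
  ∀' ∀' ((q2.boundedFormula₁ (v 0) ⊓ q0.boundedFormula₁ (v 1)) ⟹
    q1.boundedFormula₁ (f1.apply₂ (v 0) (v 1)))

/-- `∀x (Q0(x) → Q2(F2(x)))`. -/
def axF2 : LT0.Sentence :=
  ∀' (q0.boundedFormula₁ (v 0) ⟹ q2.boundedFormula₁ (f2.apply₁ (v 0)))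

/-- `∀z (Q2(z) → Q0(F3(z)))`. -/
def axF3 : LT0.Sentence :=
  ∀' (q2.boundedFormula₁ (v 0) ⟹ q0.boundedFormula₁ (f3.apply₁ (v 0)))

/-- `∀z ∀x (Q2(z) ∧ Q0(x) → F0(F1(z,x)) = x)`. -/
def axF0F1 : LT0.Sentence :=
  ∀' ∀' ((q2.boundedFormula₁ (v 0) ⊓ q0.boundedFormula₁ (v 1)) ⟹
    (f0.apply₁ (f1.apply₂ (v 0) (v 1)) =' v 1))

/-- `∀x (Q0(x) → F3(F2(x)) = x)`. -/
def axF3F2 : LT0.Sentence :=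
  ∀' (q0.boundedFormula₁ (v 0) ⟹ (f3.apply₁ (f2.apply₁ (v 0)) =' v 0))

end LT0

/-- The theory `T0+`. -/
def T0Plus : LT0.Theory :=
  {LT0.axPartition, LT0.axF0, LT0.axF1, LT0.axF2, LT0.axF3, LT0.axF0F1, LT0.axF3F2}

/-- A first-order theory `T` has the `n`-strong order property `SOP_n` if there are a formula
`φ(x̄,ȳ)` (with `lg x̄ = lg ȳ = m`), a model `M` of `T` and tuples `ā_k` (`k < ω`) from `M` such
that `M ⊨ φ[ā_k, ā_l]` for all `k < l < ω`, while `M` satisfies the negation of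
`∃ x̄_0 … x̄_{n-1} ⋀ {φ(x̄_l, x̄_k) : k = l + 1 mod n}`. -/
def SOP {L : FirstOrder.Language.{u, v}} (n : ℕ) (T : L.Theory) : Prop :=
  ∃ (m : ℕ) (φ : L.Formula (Fin m ⊕ Fin m)) (M : Theory.ModelType.{u, v, max u v} T)
    (a : ℕ → Fin m → M),
    (∀ k l : ℕ, k < l → φ.Realize (Sum.elim (a k) (a l))) ∧
    ¬ ∃ b : ℕ → Fin m → M, ∀ l < n, φ.Realize (Sum.elim (b l) (b ((l + 1) % n)))

open Structure Filter

theorem T0Plus_iff (M : Type) [LT0.Structure M] : M ⊨ T0Plus ↔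
    (∀ x : M, ((RelMap LT0.q0 ![x] ∨ RelMap LT0.q1 ![x] ∨ RelMap LT0.q2 ![x]) ∧
      ¬ (RelMap LT0.q0 ![x] ∧ RelMap LT0.q1 ![x]) ∧
      ¬ (RelMap LT0.q0 ![x] ∧ RelMap LT0.q2 ![x]) ∧
      ¬ (RelMap LT0.q1 ![x] ∧ RelMap LT0.q2 ![x]))) ∧
    (∀ x : M, RelMap LT0.q1 ![x] → RelMap LT0.q0 ![funMap LT0.f0 ![x] ]) ∧
    (∀ z x : M, RelMap LT0.q2 ![z] → RelMap LT0.q0 ![x] →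
      RelMap LT0.q1 ![funMap LT0.f1 ![z, x] ]) ∧
    (∀ x : M, RelMap LT0.q0 ![x] → RelMap LT0.q2 ![funMap LT0.f2 ![x] ]) ∧
    (∀ x : M, RelMap LT0.q2 ![x] → RelMap LT0.q0 ![funMap LT0.f3 ![x] ]) ∧
    (∀ z x : M, RelMap LT0.q2 ![z] → RelMap LT0.q0 ![x] →
      funMap LT0.f0 ![funMap LT0.f1 ![z, x] ] = x) ∧
    (∀ x : M, RelMap LT0.q0 ![x] → funMap LT0.f3 ![funMap LT0.f2 ![x] ] = x) := by
  have h0 : ∀ x : M, (Fin.snoc default x : Fin 1 → M) 0 = x := fun x => rfl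
  have h1 : ∀ z x : M, (Fin.snoc (Fin.snoc default z : Fin 1 → M) x : Fin 2 → M) 0 = z :=
    fun z x => rfl
  have h2 : ∀ z x : M, (Fin.snoc (Fin.snoc default z : Fin 1 → M) x : Fin 2 → M) 1 = x :=
    fun z x => rfl
  simp only [T0Plus, Theory.model_iff, Set.mem_insert_iff, Set.mem_singleton_iff,
    forall_eq_or_imp, forall_eq, Sentence.Realize, Formula.Realize, LT0.axPartition, LT0.axF0,
    LT0.axF1, LT0.axF2, LT0.axF3, LT0.axF0F1, LT0.axF3F2, LT0.v, BoundedFormula.realize_all,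
    BoundedFormula.realize_imp, BoundedFormula.realize_inf, BoundedFormula.realize_sup,
    BoundedFormula.realize_not, BoundedFormula.realize_rel₁, BoundedFormula.realize_bdEqual,
    Term.realize_functions_apply₁, Term.realize_functions_apply₂, Term.realize_var,
    Sum.elim_inr, h0, h1, h2, and_imp, and_assoc, or_assoc]

section amalg

variable {C : Type} [LT0.Structure C] {ι : Type}

/-- Gluing of copies of `C`, indexed by `ι`, along a coherent family of partial isomorphisms. -/
theorem exists_amalg [Nonempty C] (hC : C ⊨ T0Plus) (i₀ : ι) (R : ι → ι → C → C → Prop)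
    (hrefl : ∀ i c d, R i i c d ↔ c = d)
    (hsymm : ∀ i j c d, R i j c d → R j i d c)
    (htrans : ∀ i j k c d e, R i j c d → R j k d e → R i k c e)
    (hfun : ∀ i j n (F : LT0.Functions n) (cs ds : Fin n → C), (∀ k, R i j (cs k) (ds k)) →
      R i j (funMap F cs) (funMap F ds))
    (hrel : ∀ i j n (r : LT0.Relations n) (cs ds : Fin n → C), (∀ k, R i j (cs k) (ds k)) →
      RelMap r cs → RelMap r ds) :
    ∃ (N : Type) (_ : LT0.Structure N) (_ : Nonempty N) (_ : N ⊨ T0Plus) (g : ι → C ↪[LT0] N),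
      ∀ i j c d, R i j c d → g i c = g j d := by
  classical
  let S : Setoid (ι × C) :=
    { r := fun p q => R p.1 q.1 p.2 q.2
      iseqv := ⟨fun p => (hrefl _ _ _).2 rfl, fun h => hsymm _ _ _ _ h,
        fun h h' => htrans _ _ _ _ _ _ h h'⟩ }
  let N := Quotient S
  let mk : ι → C → N := fun i c => Quotient.mk S (i, c)
  have mk_eq : ∀ i j c d, mk i c = mk j d ↔ R i j c d := fun i j c d =>
    ⟨fun h => Quotient.exact h, fun h => Quotient.sound h⟩
  have mk_surj : ∀ x : N, ∃ i c, mk i c = x := fun x =>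
    Quotient.inductionOn x fun p => ⟨p.1, p.2, rfl⟩
  let c₀ : C := Classical.arbitrary C
  let dflt : N → N := fun x => mk x.out.1 (funMap LT0.f1 ![funMap LT0.f2 ![x.out.2], x.out.2])
  let str : LT0.Structure N :=
    { funMap := fun {n} F xs =>
        if h : ∃ (i : ι) (cs : Fin n → C), xs = fun k => mk i (cs k) then
          mk h.choose (funMap F h.choose_spec.choose)
        else if h : 1 < n then dflt (xs ⟨1, h⟩) else mk i₀ c₀
      RelMap := fun {n} r xs => ∃ (i : ι) (cs : Fin n → C),
        xs = (fun k => mk i (cs k)) ∧ RelMap r cs }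
  have hF : ∀ i n (F : LT0.Functions n) (cs : Fin n → C),
      mk i (funMap F cs) = funMap F (fun k => mk i (cs k)) := by
    intro i n F cs
    have h : ∃ (j : ι) (ds : Fin n → C), (fun k => mk i (cs k)) = fun k => mk j (ds k) :=
      ⟨i, cs, rfl⟩
    have e : funMap F (fun k => mk i (cs k)) = mk h.choose (funMap F h.choose_spec.choose) :=
      dif_pos h
    rw [e, mk_eq]
    apply hfun
    intro k
    rw [← mk_eq]
    exact congrFun h.choose_spec.choose_spec k
  have hRl : ∀ i n (r : LT0.Relations n) (cs : Fin n → C),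
      RelMap r (fun k => mk i (cs k)) ↔ RelMap r cs := by
    intro i n r cs
    constructor
    · rintro ⟨j, ds, h, h'⟩
      refine hrel j i n r ds cs (fun k => ?_) h'
      rw [← mk_eq]
      exact (congrFun h k).symm
    · intro h
      exact ⟨i, cs, rfl, h⟩
  have hF1 : ∀ i (F : LT0.Functions 1) (c : C), funMap F ![mk i c] = mk i (funMap F ![c]) := by
    intro i F c
    rw [hF]
    congr 1
    funext k
    fin_cases k
    rfl
  have hF2 : ∀ i (F : LT0.Functions 2) (c d : C),
      funMap F ![mk i c, mk i d] = mk i (funMap F ![c, d]) := by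
    intro i F c d
    rw [hF]
    congr 1
    funext k
    fin_cases k <;> rfl
  have hR1 : ∀ i (r : LT0.Relations 1) (c : C), RelMap r ![mk i c] ↔ RelMap r ![c] := by
    intro i r c
    rw [← hRl i]
    apply iff_of_eq
    congr 1
    funext k
    fin_cases k
    rfl
  have hF1cases : ∀ z x : N, (∃ i c d, z = mk i c ∧ x = mk i d) ∨
      ∃ i c, x = mk i c ∧ funMap LT0.f1 ![z, x] =
        mk i (funMap LT0.f1 ![funMap LT0.f2 ![c], c]) := by
    intro z x
    by_cases h : ∃ (i : ι) (cs : Fin 2 → C), ![z, x] = fun k => mk i (cs k)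
    · left
      obtain ⟨i, cs, h⟩ := h
      exact ⟨i, cs 0, cs 1, congrFun h 0, congrFun h 1⟩
    · right
      refine ⟨x.out.1, x.out.2, (Quotient.out_eq x).symm, ?_⟩
      exact (dif_neg h).trans (dif_pos (by norm_num : 1 < 2))
  rw [T0Plus_iff] at hC
  obtain ⟨p1, p2, p3, p4, p5, p6, p7⟩ := hC
  refine ⟨N, str, ⟨mk i₀ c₀⟩, ?_, fun i => ⟨⟨mk i, fun c d h => ?_⟩, ?_, ?_⟩, ?_⟩
  · rw [T0Plus_iff]
    refine ⟨?_, ?_, ?_, ?_, ?_, ?_, ?_⟩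
    · intro x
      obtain ⟨i, c, rfl⟩ := mk_surj x
      simpa only [hR1] using p1 c
    · intro x
      obtain ⟨i, c, rfl⟩ := mk_surj x
      simpa only [hR1, hF1] using p2 c
    · intro z x
      rcases hF1cases z x with ⟨i, c, d, rfl, rfl⟩ | ⟨i, c, rfl, e⟩
      · simpa only [hR1, hF2] using p3 c d
      · rw [e]
        simp only [hR1]
        exact fun _ h => p3 _ _ (p4 _ h) h
    · intro x
      obtain ⟨i, c, rfl⟩ := mk_surj x
      simpa only [hR1, hF1] using p4 c
    · intro x
      obtain ⟨i, c, rfl⟩ := mk_surj x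
      simpa only [hR1, hF1] using p5 c
    · intro z x
      rcases hF1cases z x with ⟨i, c, d, rfl, rfl⟩ | ⟨i, c, rfl, e⟩
      · simp only [hR1, hF2, hF1]
        exact fun h h' => congrArg _ (p6 c d h h')
      · rw [e]
        simp only [hR1, hF1]
        exact fun _ h => congrArg _ (p6 _ _ (p4 _ h) h)
    · intro x
      obtain ⟨i, c, rfl⟩ := mk_surj x
      simp only [hR1, hF1]
      exact fun h => congrArg _ (p7 c h)
  · exact (hrefl i c d).1 ((mk_eq _ _ _ _).1 h)
  · intro n F cs
    exact hF i n F cs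
  · intro n r cs
    exact hRl i n r cs
  · intro i j c d h
    exact (mk_eq i j c d).2 h

end amalg

/-- The square of the hyperfilter on `ℕ`. -/
noncomputable def hyperSq : Ultrafilter (ℕ × ℕ) :=
  (hyperfilter ℕ).bind fun i => (hyperfilter ℕ).map fun j => (i, j)

theorem eventually_hyperSq (P : ℕ × ℕ → Prop) : (∀ᶠ p in (hyperSq : Filter (ℕ × ℕ)), P p) ↔
    ∀ᶠ i in (hyperfilter ℕ : Filter ℕ), ∀ᶠ j in (hyperfilter ℕ : Filter ℕ), P (i, j) :=
  Iff.rfl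

section glue

variable {M : Type} [LT0.Structure M]

/-- The iterated ultrapower. -/
abbrev UPow (M : Type) : Type := (hyperSq : Filter (ℕ × ℕ)).Product (fun _ => M)

/-- Class of a function. -/
noncomputable def cls (f : ℕ × ℕ → M) : UPow M := (f : (hyperSq : Filter (ℕ × ℕ)).Product (fun _ => M))

theorem cls_eq {M : Type} (f g : ℕ × ℕ → M) :
    cls f = cls g ↔ ∀ᶠ p in (hyperSq : Filter (ℕ × ℕ)), f p = g p :=
  ⟨fun h => Quotient.exact h, fun h => Quotient.sound h⟩

theorem cls_surj {M : Type} (c : UPow M) : ∃ f, c = cls f :=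
  Quotient.inductionOn c fun f => ⟨f, rfl⟩

theorem funMap_cls {n : ℕ} (F : LT0.Functions n) (fs : Fin n → ℕ × ℕ → M) :
    funMap F (fun k => cls (fs k)) = cls fun p => funMap F fun k => fs k p :=
  Ultraproduct.funMap_cast F fs

theorem relMap_cls {n : ℕ} (r : LT0.Relations n) (fs : Fin n → ℕ × ℕ → M) :
    RelMap r (fun k => cls (fs k)) ↔
      ∀ᶠ p in (hyperSq : Filter (ℕ × ℕ)), RelMap r fun k => fs k p := by
  exact relMap_quotient_mk' ((hyperSq : Filter (ℕ × ℕ)).productSetoid fun _ => M) r fs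

/-- The partial isomorphism induced by a pair of maps. -/
def DD {M X : Type} (s t : ℕ × ℕ → X) (c d : UPow M) : Prop :=
  ∃ f : X → M, c = cls (f ∘ s) ∧ d = cls (f ∘ t)

theorem DD.funMap {X : Type} {s t : ℕ × ℕ → X} {n : ℕ} (F : LT0.Functions n)
    {cs ds : Fin n → UPow M} (h : ∀ k, DD s t (cs k) (ds k)) :
    DD s t (funMap F cs) (funMap F ds) := by
  choose f h1 h2 using h
  obtain rfl : cs = fun k => cls (f k ∘ s) := funext h1
  obtain rfl : ds = fun k => cls (f k ∘ t) := funext h2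
  exact ⟨fun x => Structure.funMap F fun k => f k x, funMap_cls F _, funMap_cls F _⟩

theorem DD.relMap {X : Type} {s t : ℕ × ℕ → X}
    (hst : ∀ P : X → Prop, (∀ᶠ p in (hyperSq : Filter (ℕ × ℕ)), P (s p)) →
      ∀ᶠ p in (hyperSq : Filter (ℕ × ℕ)), P (t p))
    {n : ℕ} (r : LT0.Relations n)
    {cs ds : Fin n → UPow M} (h : ∀ k, DD s t (cs k) (ds k)) (hr : RelMap r cs) :
    RelMap r ds := by
  choose f h1 h2 using h
  obtain rfl : cs = fun k => cls (f k ∘ s) := funext h1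
  obtain rfl : ds = fun k => cls (f k ∘ t) := funext h2
  rw [relMap_cls] at hr ⊢
  exact hst (fun x => RelMap r fun k => f k x) hr

theorem DD.symm {M X : Type} {s t : ℕ × ℕ → X} {c d : UPow M} (h : DD s t c d) : DD t s d c := by
  obtain ⟨f, h1, h2⟩ := h
  exact ⟨f, h2, h1⟩

theorem DD.inj {M X : Type} {s t : ℕ × ℕ → X}
    (hst : ∀ P : X → Prop, (∀ᶠ p in (hyperSq : Filter (ℕ × ℕ)), P (t p)) →
      ∀ᶠ p in (hyperSq : Filter (ℕ × ℕ)), P (s p)) {c c' d : UPow M}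
    (h : DD s t c d) (h' : DD s t c' d) : c = c' := by
  obtain ⟨f, h1, h2⟩ := h
  obtain ⟨g, h3, h4⟩ := h'
  rw [h1, h3, cls_eq]
  rw [h2, cls_eq] at h4
  exact hst (fun x => f x = g x) h4

/-- Constants. -/
def KK {M : Type} (c : UPow M) : Prop := ∃ m : M, c = cls fun _ => m

theorem KK.dd {M X : Type} (s t : ℕ × ℕ → X) {c : UPow M} (h : KK c) : DD s t c c := by
  obtain ⟨m, h⟩ := h
  exact ⟨fun _ => m, h, h⟩

theorem KK_of_fst_snd {M : Type} (f g : ℕ → M) (h : cls (f ∘ Prod.fst) = cls (g ∘ Prod.snd)) :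
    KK (cls (f ∘ Prod.fst)) := by
  have h' := h
  rw [cls_eq, eventually_hyperSq] at h'
  obtain ⟨i, hi⟩ := h'.exists
  refine ⟨f i, ?_⟩
  rw [h, cls_eq, eventually_hyperSq]
  exact Eventually.of_forall fun _ => hi.mono fun j hj => hj.symm

theorem hyper_fst (P : ℕ → Prop) : (∀ᶠ p in (hyperSq : Filter (ℕ × ℕ)), P p.1) ↔
    ∀ᶠ i in (hyperfilter ℕ : Filter ℕ), P i := by
  rw [eventually_hyperSq]
  simp

theorem hyper_snd (P : ℕ → Prop) : (∀ᶠ p in (hyperSq : Filter (ℕ × ℕ)), P p.2) ↔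
    ∀ᶠ i in (hyperfilter ℕ : Filter ℕ), P i := by
  rw [eventually_hyperSq]
  simp

open Classical in
/-- The gluing relation. -/
def RR {M : Type} {n : ℕ} (i j : ZMod n) (c d : UPow M) : Prop :=
  if i = j then DD id id c d else if j = i + 1 then DD Prod.snd Prod.fst c d
  else if i = j + 1 then DD Prod.fst Prod.snd c d
  else DD (fun _ => ()) (fun _ => ()) c d

/-- Every instance of the gluing relation is one of the `DD` relations. -/
theorem RR_eq (M : Type) {n : ℕ} (i j : ZMod n) : ∃ (X : Type) (s t : ℕ × ℕ → X),
    (∀ P : X → Prop, (∀ᶠ p in (hyperSq : Filter (ℕ × ℕ)), P (s p)) ↔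
      ∀ᶠ p in (hyperSq : Filter (ℕ × ℕ)), P (t p)) ∧
    (∀ c d : UPow M, RR i j c d ↔ DD s t c d) := by
  unfold RR
  split_ifs
  · exact ⟨_, _, _, fun P => Iff.rfl, fun c d => Iff.rfl⟩
  · exact ⟨_, _, _, fun P => by rw [hyper_fst, hyper_snd], fun c d => Iff.rfl⟩
  · exact ⟨_, _, _, fun P => by rw [hyper_fst, hyper_snd], fun c d => Iff.rfl⟩
  · exact ⟨_, _, _, fun P => Iff.rfl, fun c d => Iff.rfl⟩

theorem RR_refl {M : Type} {n : ℕ} (i : ZMod n) (c d : UPow M) : RR i i c d ↔ c = d := by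
  unfold RR
  rw [if_pos rfl]
  constructor
  · rintro ⟨f, rfl, rfl⟩
    rfl
  · rintro rfl
    obtain ⟨f, rfl⟩ := cls_surj c
    exact ⟨f, rfl, rfl⟩

theorem RR_symm {M : Type} {n : ℕ} (h2 : (2 : ZMod n) ≠ 0) (i j : ZMod n) (c d : UPow M)
    (h : RR i j c d) : RR j i d c := by
  unfold RR at *
  split_ifs at * with a1 a2 a3 a4 a5 a6 a7 a8 a9 <;> first | exact h.symm | (exfalso; grind)

theorem RR_const {M : Type} {n : ℕ} (i j : ZMod n) {c : UPow M} (h : KK c) : RR i j c c := by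
  obtain ⟨X, s, t, _, h'⟩ := RR_eq M i j
  exact (h' c c).2 (h.dd s t)

theorem RR_inj {M : Type} {n : ℕ} {i j : ZMod n} {c c' d : UPow M} (h : RR i j c d)
    (h' : RR i j c' d) : c = c' := by
  obtain ⟨X, s, t, hst, e⟩ := RR_eq M i j
  rw [e] at h h'
  exact h.inj (fun P => (hst P).2) h'

theorem RR_mid {M : Type} {n : ℕ} {i j k : ZMod n} {c d e : UPow M} (h : RR i j c d)
    (h' : RR j k d e) (hij : i ≠ j) (hjk : j ≠ k) (hik : i ≠ k) : KK d := by
  unfold RR at *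
  rw [if_neg hij] at h
  rw [if_neg hjk] at h'
  split_ifs at h with a1 a2
  · split_ifs at h' with b1 b2
    · obtain ⟨f, _, h1⟩ := h
      obtain ⟨g, h2, _⟩ := h'
      rw [h1] at h2 ⊢
      exact KK_of_fst_snd f g h2
    · exfalso; grind
    · obtain ⟨g, h2, _⟩ := h'
      exact ⟨g (), h2⟩
  · split_ifs at h' with b1 b2
    · exfalso; grind
    · obtain ⟨f, _, h1⟩ := h
      obtain ⟨g, h2, _⟩ := h'
      rw [h1] at h2
      rw [h1, h2]
      exact KK_of_fst_snd g f h2.symm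
    · obtain ⟨g, h2, _⟩ := h'
      exact ⟨g (), h2⟩
  · obtain ⟨g, _, h2⟩ := h
    exact ⟨g (), h2⟩

theorem RR_trans {M : Type} {n : ℕ} (h2 : (2 : ZMod n) ≠ 0) (i j k : ZMod n) (c d e : UPow M)
    (h : RR i j c d) (h' : RR j k d e) : RR i k c e := by
  by_cases hij : i = j
  · subst hij
    rw [RR_refl] at h
    rwa [h]
  by_cases hjk : j = k
  · subst hjk
    rw [RR_refl] at h'
    rwa [← h']
  by_cases hik : i = k
  · subst hik
    rw [RR_refl]
    exact RR_inj h (RR_symm h2 _ _ _ _ h')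
  · have hd := RR_mid h h' hij hjk hik
    have e1 : c = d := RR_inj h (RR_const i j hd)
    have e2 : e = d := RR_inj (RR_symm h2 _ _ _ _ h') (RR_const k j hd)
    rw [e1, e2]
    exact RR_const i k hd

end glue

theorem not_SOP_of (Tstar : LT0.Theory)
    (hcomplete : Tstar.IsComplete)
    (hmodels : ∀ (M : Type) [LT0.Structure M], M ⊨ Tstar → M ⊨ T0Plus)
    (hembeds : ∀ (M : Type) [LT0.Structure M] [Nonempty M], M ⊨ T0Plus →
      ∃ N : Theory.ModelType.{0, 0, 0} Tstar, Nonempty (M ↪[LT0] N))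
    (hqe : ∀ (n : ℕ) (φ : LT0.Formula (Fin n)),
      ∃ ψ : LT0.Formula (Fin n), ψ.IsQF ∧ Tstar ⊨ᵇ (φ ⇔ ψ))
    (n : ℕ) (hn : n ≠ 0) (h1 : (1 : ZMod n) ≠ 0) (h2 : (2 : ZMod n) ≠ 0) : ¬ SOP n Tstar := by
  rintro ⟨m, φ, M, a, ha, hb⟩
  apply hb
  clear hb
  -- the iterated ultrapower
  have hUT : UPow M ⊨ Tstar := by
    rw [Theory.model_iff]
    intro χ hχ
    rw [Ultraproduct.sentence_realize]
    exact Eventually.of_forall fun _ => Theory.realize_sentence_of_mem Tstar hχ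
  have hUne : Nonempty (UPow M) := ⟨cls fun _ => Classical.arbitrary M⟩
  obtain ⟨N₀, strN₀, neN₀, hN₀, g₀, hg₀⟩ := exists_amalg (C := UPow M) (hmodels _ hUT)
    (0 : ZMod n) RR RR_refl (RR_symm h2) (RR_trans h2)
    (by
      intro i j n F cs ds h
      obtain ⟨X, s, t, _, e⟩ := RR_eq M i j
      simp only [e] at h ⊢
      exact DD.funMap F h)
    (by
      intro i j n r cs ds h
      obtain ⟨X, s, t, hst, e⟩ := RR_eq M i j
      simp only [e] at h
      exact DD.relMap (fun P => (hst P).1) r h)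
  obtain ⟨N, ⟨ε⟩⟩ := hembeds N₀ hN₀
  obtain ⟨ψ, hψ, hφψ⟩ := hqe (m + m) (φ.relabel finSumFinEquiv)
  have key : ∀ (A : Type) [LT0.Structure A] [A ⊨ Tstar] [Nonempty A] (w : Fin m ⊕ Fin m → A),
      φ.Realize w ↔ ψ.Realize (w ∘ finSumFinEquiv.symm) := by
    intro A _ _ _ w
    have := hφψ.realize_formula A (v := w ∘ finSumFinEquiv.symm)
    rw [Formula.realize_iff, Formula.realize_relabel] at this
    rw [← this, Function.comp_assoc, Equiv.symm_comp_self, Function.comp_id]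
  have hpres : ∀ (g : UPow M ↪[LT0] N) (w : Fin m ⊕ Fin m → UPow M),
      φ.Realize w → φ.Realize (g ∘ w) := by
    intro g w hw
    rw [key] at hw ⊢
    have := (hψ.realize_embedding g (v := w ∘ finSumFinEquiv.symm) (xs := default)).2 hw
    rw [Formula.Realize, Function.comp_assoc]
    rwa [Subsingleton.elim (g ∘ default) default] at this
  let g : ZMod n → UPow M ↪[LT0] N := fun i => ε.comp (g₀ i)
  have hg : ∀ i j c d, RR i j c d → g i c = g j d := fun i j c d h => congrArg ε (hg₀ i j c d h)
  let α₀ : Fin m → UPow M := fun k => cls fun p => a p.1 k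
  let α₁ : Fin m → UPow M := fun k => cls fun p => a p.2 k
  have hα : φ.Realize (Sum.elim α₀ α₁) := by
    have e : Sum.elim α₀ α₁ = fun i => cls fun p => Sum.elim (a p.1) (a p.2) i := by
      funext i
      cases i <;> rfl
    rw [e]
    refine (Ultraproduct.realize_formula_cast (u := hyperSq) (M := fun _ => M) φ
      (fun i p => Sum.elim (a p.1) (a p.2) i)).2 ?_
    rw [eventually_hyperSq]
    refine Eventually.of_forall fun i => ?_
    have : ∀ᶠ j in (hyperfilter ℕ : Filter ℕ), i < j := by
      refine Filter.Eventually.filter_mono ?_ (Filter.eventually_gt_atTop i)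
      rw [← Nat.cofinite_eq_atTop]
      exact hyperfilter_le_cofinite
    exact this.mono fun j hj => ha i j hj
  have hNb : ∀ i : ZMod n, φ.Realize (Sum.elim (g i ∘ α₀) (g (i + 1) ∘ α₀)) := by
    intro i
    have := hpres (g i) _ hα
    rw [Sum.comp_elim] at this
    convert this using 2
    funext k
    refine (hg i (i + 1) _ _ ?_).symm
    unfold RR
    rw [if_neg (by simpa using h1), if_pos rfl]
    exact ⟨fun i => a i k, rfl, rfl⟩
  -- transfer to `M`
  let θ : LT0.Formula (Empty ⊕ (ZMod n × Fin m)) :=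
    haveI : NeZero n := ⟨hn⟩
    Formula.iInf fun i : ZMod n => φ.relabel
      (Sum.elim (fun k => Sum.inr (i, k)) (fun k => Sum.inr (i + 1, k)))
  haveI : NeZero n := ⟨hn⟩
  have hθ : ∀ (A : Type) [LT0.Structure A], A ⊨ (θ.iExs (ZMod n × Fin m) : LT0.Sentence) ↔
      ∃ b : ZMod n × Fin m → A, ∀ i : ZMod n,
        φ.Realize (Sum.elim (fun k => b (i, k)) (fun k => b (i + 1, k))) := by
    intro A _
    rw [Sentence.Realize, Formula.realize_iExs]
    refine exists_congr fun b => ?_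
    rw [Formula.realize_iInf]
    refine forall_congr' fun i => ?_
    rw [Formula.realize_relabel, Sum.comp_elim]
    rfl
  have hN : N ⊨ (θ.iExs (ZMod n × Fin m) : LT0.Sentence) :=
    (hθ N).2 ⟨fun p => g p.1 (α₀ p.2), hNb⟩
  rw [hcomplete.realize_sentence_iff, ← hcomplete.realize_sentence_iff _ M, hθ] at hN
  obtain ⟨b, hb⟩ := hN
  refine ⟨fun l k => b ((l : ZMod n), k), fun l _ => ?_⟩
  have := hb (l : ZMod n)
  simpa using this

/-- If `T*` is a complete theory in the language of `T0+` such that every model of `T*` is a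
model of `T0+`, every model of `T0+` embeds into some model of `T*`, and `T*` has quantifier
elimination, then `T*` does not have `SOP_3`, and consequently does not have `SOP_4`. -/
theorem tstar_nsop3 (Tstar : LT0.Theory)
    (hcomplete : Tstar.IsComplete)
    (hmodels : ∀ (M : Type) [LT0.Structure M], M ⊨ Tstar → M ⊨ T0Plus)
    (hembeds : ∀ (M : Type) [LT0.Structure M] [Nonempty M], M ⊨ T0Plus →
      ∃ N : Theory.ModelType.{0, 0, 0} Tstar, Nonempty (M ↪[LT0] N))
    (hqe : ∀ (n : ℕ) (φ : LT0.Formula (Fin n)),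
      ∃ ψ : LT0.Formula (Fin n), ψ.IsQF ∧ Tstar ⊨ᵇ (φ ⇔ ψ)) :
    ¬ SOP 3 Tstar ∧ ¬ SOP 4 Tstar := by
  exact ⟨not_SOP_of Tstar hcomplete hmodels hembeds hqe 3 (by decide) (by decide) (by decide),
    not_SOP_of Tstar hcomplete hmodels hembeds hqe 4 (by decide) (by decide) (by decide)⟩
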